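/- arXiv:2412.15078 — 5 statements merged into one kernel-verified Lean document; each statement's English description precedes it below -/
import Mathlib

section
/- Suppose there exist symmetric positive definite matrix-valued sequences P1(h,k) (of size n1×n1) and P2(h,k) (of size n2×n2), defined for all (h,k) with 0 ≤ h ≤ N1+1 and 0 ≤ k ≤ N2+1, such that, writing P(h,k) = diag(P1(h,k), P2(h,k)) and P⁺(h,k) = diag(P1(h+1,k), P2(h,k+1)): (i) A(h,k)ᵀ P⁺(h,k) A(h,k) − P(h,k) is negative definite for all (h,k) ∈ {0,…,N1}×{0,…,N2}; (ii) P(h,k) − Γ(h,k) is positive definite for all (h,k) ∈ {0,…,N1}×{0,…,N2}; (iii) R1(k) − P1(0,k) is positive semidefinite for all k ∈ {0,…,N2}; (iv) R2(h) − P2(h,0) is positive semidefinite for all h ∈ {0,…,N1}. Then the 2D Roesser system with system matrix A(h,k) is finite-region stable with respect to ({0,…,N1}×{0,…,N2}, R(h,k), Γ(h,k)), i.e., every solution whose initial data satisfy Σ_{k=0}^{N2} x1(0,k)ᵀ R1(k) x1(0,k) + Σ_{h=0}^{N1} x2(h,0)ᵀ R2(h) x2(h,0) ≤ 1 also satisfies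 x1(h,k)ᵀ Γ1(h,k) x1(h,k) + x2(h,k)ᵀ Γ2(h,k) x2(h,k) < 1 for all (h,k) ∈ {0,…,N1}×{0,…,N2}. -/
open Matrix

/-- A real square matrix is negative definite if `xᵀ M x < 0` for all `x ≠ 0`. -/
def NegDef {n : Type*} [Fintype n] (M : Matrix n n ℝ) : Prop :=
  ∀ x : n → ℝ, x ≠ 0 → x ⬝ᵥ (M *ᵥ x) < 0

/-! Read `x₁ᵀ P₁ x₁` and `x₂ᵀ P₂ x₂` as the energies entering the cell `(h, k)` through its left and
bottom edges. The matrix inequality says that no cell emits more energy through its right and top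
edges than it receives. Summed over the cells below a staircase, the inner edges cancel, so the
energy crossing the staircase is at most the energy entering the region, which the initial condition
bounds by one. A staircase running through the left and bottom edges of `(h, k)` gives the claim. -/

section CellInequality

variable {M : Type*} [AddCommMonoid M] [PartialOrder M] [IsOrderedAddMonoid M]

lemma sum_range_add_le_of_forall_lt {a a' b : ℕ → M} {n : ℕ}
    (hstep : ∀ j < n, a' j + b (j + 1) ≤ a j + b j) :
    ∑ j ∈ Finset.range n, a' j + b n ≤ ∑ j ∈ Finset.range n, a j + b 0 := by
  induction n with
  | zero => simp
  | succ n ih =>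
    rw [Finset.sum_range_succ, Finset.sum_range_succ]
    calc ∑ j ∈ Finset.range n, a' j + a' n + b (n + 1)
        = ∑ j ∈ Finset.range n, a' j + (a' n + b (n + 1)) := add_assoc _ _ _
      _ ≤ ∑ j ∈ Finset.range n, a' j + (a n + b n) :=
        add_le_add_right (hstep n n.lt_succ_self) _
      _ = a n + (∑ j ∈ Finset.range n, a' j + b n) := by abel
      _ ≤ a n + (∑ j ∈ Finset.range n, a j + b 0) :=
        add_le_add_right (ih fun j hj => hstep j (hj.trans n.lt_succ_self)) _
      _ = ∑ j ∈ Finset.range n, a j + a n + b 0 := by abel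

-- `a i j` and `b i j` are the energies through the left and bottom edges of the cell `(i, j)`.
variable {a b : ℕ → ℕ → M} {m n : ℕ}

lemma sum_top_add_sum_right_le_sum_bottom_add_sum_left
    (hcell : ∀ i < m, ∀ j < n, a (i + 1) j + b i (j + 1) ≤ a i j + b i j) :
    ∑ i ∈ Finset.range m, b i n + ∑ j ∈ Finset.range n, a m j ≤
      ∑ i ∈ Finset.range m, b i 0 + ∑ j ∈ Finset.range n, a 0 j := by
  refine sum_range_add_le_of_forall_lt (b := fun i => ∑ j ∈ Finset.range n, a i j) fun i hi => ?_
  rw [add_comm, add_comm (b i 0)]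
  exact sum_range_add_le_of_forall_lt (hcell i hi)

lemma left_add_bottom_le_sum_left_add_sum_bottom
    (ha : ∀ i ≤ m, ∀ j < n, 0 ≤ a i j) (hb : ∀ i < m, ∀ j ≤ n, 0 ≤ b i j)
    (hcell : ∀ i < m, ∀ j < n, a (i + 1) j + b i (j + 1) ≤ a i j + b i j)
    {h k : ℕ} (hh : h < m) (hk : k < n) :
    a h k + b h k ≤ ∑ j ∈ Finset.range n, a 0 j + ∑ i ∈ Finset.range m, b i 0 := by
  have column : ∑ j ∈ Finset.range k, a (h + 1) j + b h k ≤
      ∑ j ∈ Finset.range k, a h j + b h 0 :=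
    sum_range_add_le_of_forall_lt fun j hj => hcell h hh j (hj.trans hk)
  have rectangle : ∑ i ∈ Finset.range h, b i (k + 1) + ∑ j ∈ Finset.range (k + 1), a h j ≤
      ∑ i ∈ Finset.range h, b i 0 + ∑ j ∈ Finset.range (k + 1), a 0 j :=
    sum_top_add_sum_right_le_sum_bottom_add_sum_left fun i hi j hj =>
      hcell i (hi.trans hh) j (hj.trans_le hk)
  have right_nonneg : 0 ≤ ∑ j ∈ Finset.range k, a (h + 1) j :=
    Finset.sum_nonneg fun j hj => ha _ hh j ((Finset.mem_range.1 hj).trans hk)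
  have top_nonneg : 0 ≤ ∑ i ∈ Finset.range h, b i (k + 1) :=
    Finset.sum_nonneg fun i hi => hb i ((Finset.mem_range.1 hi).trans hh) _ hk
  calc a h k + b h k
      ≤ a h k + (∑ j ∈ Finset.range k, a (h + 1) j + b h k) := by
        gcongr
        exact le_add_of_nonneg_left right_nonneg
    _ ≤ a h k + (∑ j ∈ Finset.range k, a h j + b h 0) := by gcongr
    _ = ∑ j ∈ Finset.range (k + 1), a h j + b h 0 := by rw [Finset.sum_range_succ]; abel
    _ ≤ ∑ i ∈ Finset.range h, b i (k + 1) + ∑ j ∈ Finset.range (k + 1), a h j + b h 0 := by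
        gcongr
        exact le_add_of_nonneg_left top_nonneg
    _ ≤ ∑ i ∈ Finset.range h, b i 0 + ∑ j ∈ Finset.range (k + 1), a 0 j + b h 0 := by gcongr
    _ = ∑ j ∈ Finset.range (k + 1), a 0 j + ∑ i ∈ Finset.range (h + 1), b i 0 := by
        rw [Finset.sum_range_succ (fun i => b i 0)]; abel
    _ ≤ ∑ j ∈ Finset.range n, a 0 j + ∑ i ∈ Finset.range m, b i 0 := by
        gcongr
        · exact fun j hj _ => ha 0 m.zero_le j (Finset.mem_range.1 hj)
        · exact hk
        · exact fun i hi _ => hb i (Finset.mem_range.1 hi) 0 n.zero_le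
        · exact hh

end CellInequality

section QuadraticForm

variable {m n R : Type*} [Fintype m] [Fintype n]

lemma sumElim_dotProduct_fromBlocks_diagonal_mulVec [NonUnitalNonAssocSemiring R]
    (P : Matrix m m R) (Q : Matrix n n R) (u : m → R) (v : n → R) :
    Sum.elim u v ⬝ᵥ (fromBlocks P 0 0 Q *ᵥ Sum.elim u v) = u ⬝ᵥ (P *ᵥ u) + v ⬝ᵥ (Q *ᵥ v) := by
  simp [fromBlocks_mulVec, sumElim_dotProduct_sumElim]

lemma dotProduct_transpose_mul_mul_mulVec [CommSemiring R]
    (A : Matrix m n R) (P : Matrix m m R) (x : n → R) :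
    x ⬝ᵥ ((Aᵀ * P * A) *ᵥ x) = (A *ᵥ x) ⬝ᵥ (P *ᵥ (A *ᵥ x)) := by
  rw [← mulVec_mulVec, ← mulVec_mulVec, dotProduct_mulVec, vecMul_transpose]

section StarRing

variable [Ring R] [PartialOrder R] [IsOrderedAddMonoid R] [StarRing R] {P Q : Matrix n n R}

lemma dotProduct_mulVec_le_of_sub_posSemidef (hPQ : (Q - P).PosSemidef) (x : n → R) :
    star x ⬝ᵥ (P *ᵥ x) ≤ star x ⬝ᵥ (Q *ᵥ x) := by
  rw [← sub_nonneg, ← dotProduct_sub, ← sub_mulVec]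
  exact hPQ.dotProduct_mulVec_nonneg x

lemma dotProduct_mulVec_lt_of_sub_posDef (hPQ : (Q - P).PosDef) {x : n → R} (hx : x ≠ 0) :
    star x ⬝ᵥ (P *ᵥ x) < star x ⬝ᵥ (Q *ᵥ x) := by
  rw [← sub_pos, ← dotProduct_sub, ← sub_mulVec]
  exact hPQ.dotProduct_mulVec_pos hx

lemma dotProduct_mulVec_lt_of_sub_posDef_of_le (hPQ : (Q - P).PosDef) {x : n → R} {c : R}
    (hc : 0 < c) (hQ : star x ⬝ᵥ (Q *ᵥ x) ≤ c) : star x ⬝ᵥ (P *ᵥ x) < c := by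
  rcases eq_or_ne x 0 with rfl | hx
  · simpa using hc
  · exact (dotProduct_mulVec_lt_of_sub_posDef hPQ hx).trans_le hQ

end StarRing

lemma roesser_energy_le [CommRing R] [PartialOrder R] [IsOrderedAddMonoid R]
    {A₁₁ : Matrix m m R} {A₁₂ : Matrix m n R} {A₂₁ : Matrix n m R} {A₂₂ : Matrix n n R}
    {P₁ Q₁ : Matrix m m R} {P₂ Q₂ : Matrix n n R}
    (hLMI : ∀ z, z ⬝ᵥ (((fromBlocks A₁₁ A₁₂ A₂₁ A₂₂)ᵀ * fromBlocks Q₁ 0 0 Q₂ *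
      fromBlocks A₁₁ A₁₂ A₂₁ A₂₂ - fromBlocks P₁ 0 0 P₂) *ᵥ z) ≤ 0)
    {u u' : m → R} {v v' : n → R}
    (hu : u' = A₁₁ *ᵥ u + A₁₂ *ᵥ v) (hv : v' = A₂₁ *ᵥ u + A₂₂ *ᵥ v) :
    u' ⬝ᵥ (Q₁ *ᵥ u') + v' ⬝ᵥ (Q₂ *ᵥ v') ≤ u ⬝ᵥ (P₁ *ᵥ u) + v ⬝ᵥ (P₂ *ᵥ v) := by
  have next_state : fromBlocks A₁₁ A₁₂ A₂₁ A₂₂ *ᵥ Sum.elim u v = Sum.elim u' v' := by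
    simp [fromBlocks_mulVec, hu, hv]
  have hz := hLMI (Sum.elim u v)
  rwa [sub_mulVec, dotProduct_sub, sub_nonpos, dotProduct_transpose_mul_mul_mulVec, next_state,
    sumElim_dotProduct_fromBlocks_diagonal_mulVec,
    sumElim_dotProduct_fromBlocks_diagonal_mulVec] at hz

end QuadraticForm

lemma NegDef.dotProduct_mulVec_nonpos {n : Type*} [Fintype n] {M : Matrix n n ℝ} (hM : NegDef M)
    (x : n → ℝ) : x ⬝ᵥ (M *ᵥ x) ≤ 0 := by
  rcases eq_or_ne x 0 with rfl | hx
  · simp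
  · exact (hM x hx).le

theorem frs_sufficient_condition_general
    {m n : Type*} [Fintype m] [Fintype n] {N₁ N₂ : ℕ}
    {A₁₁ : ℕ → ℕ → Matrix m m ℝ} {A₁₂ : ℕ → ℕ → Matrix m n ℝ}
    {A₂₁ : ℕ → ℕ → Matrix n m ℝ} {A₂₂ : ℕ → ℕ → Matrix n n ℝ}
    {R₁ : ℕ → Matrix m m ℝ} {R₂ : ℕ → Matrix n n ℝ}
    {Γ₁ P₁ : ℕ → ℕ → Matrix m m ℝ} {Γ₂ P₂ : ℕ → ℕ → Matrix n n ℝ}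
    (hP₁ : ∀ h k, h ≤ N₁ + 1 → k ≤ N₂ → (P₁ h k).PosSemidef)
    (hP₂ : ∀ h k, h ≤ N₁ → k ≤ N₂ + 1 → (P₂ h k).PosSemidef)
    (hLMI : ∀ h k, h ≤ N₁ → k ≤ N₂ → ∀ z,
      z ⬝ᵥ (((fromBlocks (A₁₁ h k) (A₁₂ h k) (A₂₁ h k) (A₂₂ h k))ᵀ *
        fromBlocks (P₁ (h + 1) k) 0 0 (P₂ h (k + 1)) *
        fromBlocks (A₁₁ h k) (A₁₂ h k) (A₂₁ h k) (A₂₂ h k) -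
        fromBlocks (P₁ h k) 0 0 (P₂ h k)) *ᵥ z) ≤ 0)
    (hPΓ : ∀ h k, h ≤ N₁ → k ≤ N₂ →
      (fromBlocks (P₁ h k - Γ₁ h k) 0 0 (P₂ h k - Γ₂ h k)).PosDef)
    (hPR₁ : ∀ k, k ≤ N₂ → (R₁ k - P₁ 0 k).PosSemidef)
    (hPR₂ : ∀ h, h ≤ N₁ → (R₂ h - P₂ h 0).PosSemidef)
    {x₁ : ℕ → ℕ → m → ℝ} {x₂ : ℕ → ℕ → n → ℝ}
    (hx₁ : ∀ h k, x₁ (h + 1) k = A₁₁ h k *ᵥ x₁ h k + A₁₂ h k *ᵥ x₂ h k)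
    (hx₂ : ∀ h k, x₂ h (k + 1) = A₂₁ h k *ᵥ x₁ h k + A₂₂ h k *ᵥ x₂ h k)
    (hinit : ∑ k ∈ Finset.range (N₂ + 1), x₁ 0 k ⬝ᵥ (R₁ k *ᵥ x₁ 0 k) +
      ∑ h ∈ Finset.range (N₁ + 1), x₂ h 0 ⬝ᵥ (R₂ h *ᵥ x₂ h 0) ≤ 1) :
    ∀ h k, h ≤ N₁ → k ≤ N₂ →
      x₁ h k ⬝ᵥ (Γ₁ h k *ᵥ x₁ h k) + x₂ h k ⬝ᵥ (Γ₂ h k *ᵥ x₂ h k) < 1 := by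
  intro h k hh hk
  have energy_le_one : x₁ h k ⬝ᵥ (P₁ h k *ᵥ x₁ h k) + x₂ h k ⬝ᵥ (P₂ h k *ᵥ x₂ h k) ≤ 1 :=
    calc x₁ h k ⬝ᵥ (P₁ h k *ᵥ x₁ h k) + x₂ h k ⬝ᵥ (P₂ h k *ᵥ x₂ h k)
        ≤ ∑ k ∈ Finset.range (N₂ + 1), x₁ 0 k ⬝ᵥ (P₁ 0 k *ᵥ x₁ 0 k) +
          ∑ h ∈ Finset.range (N₁ + 1), x₂ h 0 ⬝ᵥ (P₂ h 0 *ᵥ x₂ h 0) :=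
        left_add_bottom_le_sum_left_add_sum_bottom
          (a := fun h k => x₁ h k ⬝ᵥ (P₁ h k *ᵥ x₁ h k))
          (b := fun h k => x₂ h k ⬝ᵥ (P₂ h k *ᵥ x₂ h k))
          (fun i hi j hj => (hP₁ i j hi (Nat.le_of_lt_succ hj)).dotProduct_mulVec_nonneg _)
          (fun i hi j hj => (hP₂ i j (Nat.le_of_lt_succ hi) hj).dotProduct_mulVec_nonneg _)
          (fun i hi j hj => roesser_energy_le
            (hLMI i j (Nat.le_of_lt_succ hi) (Nat.le_of_lt_succ hj)) (hx₁ i j) (hx₂ i j))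
          (Nat.lt_succ_of_le hh) (Nat.lt_succ_of_le hk)
      _ ≤ ∑ k ∈ Finset.range (N₂ + 1), x₁ 0 k ⬝ᵥ (R₁ k *ᵥ x₁ 0 k) +
          ∑ h ∈ Finset.range (N₁ + 1), x₂ h 0 ⬝ᵥ (R₂ h *ᵥ x₂ h 0) := by
        gcongr with k hk h hh
        · exact dotProduct_mulVec_le_of_sub_posSemidef (hPR₁ k (Finset.mem_range_succ_iff.1 hk)) _
        · exact dotProduct_mulVec_le_of_sub_posSemidef (hPR₂ h (Finset.mem_range_succ_iff.1 hh)) _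
      _ ≤ 1 := hinit
  have sub_posDef :
      (fromBlocks (P₁ h k) 0 0 (P₂ h k) - fromBlocks (Γ₁ h k) 0 0 (Γ₂ h k)).PosDef := by
    simpa [sub_eq_add_neg, fromBlocks_neg, fromBlocks_add] using hPΓ h k hh hk
  rw [← sumElim_dotProduct_fromBlocks_diagonal_mulVec] at energy_le_one ⊢
  exact dotProduct_mulVec_lt_of_sub_posDef_of_le sub_posDef one_pos energy_le_one

/-- **Sufficient condition for finite-region stability of 2D Roesser systems.**
If there exist symmetric positive definite matrix-valued sequences `P1(h,k)`, `P2(h,k)`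
(defined and positive definite for `0 ≤ h ≤ N1+1`, `0 ≤ k ≤ N2+1`) such that
(i) `A(h,k)ᵀ P⁺(h,k) A(h,k) − P(h,k) < 0` on `{0,…,N1}×{0,…,N2}`,
(ii) `P(h,k) > Γ(h,k)` on `{0,…,N1}×{0,…,N2}`,
(iii) `P1(0,k) ≤ R1(k)` for `k ∈ {0,…,N2}`,
(iv) `P2(h,0) ≤ R2(h)` for `h ∈ {0,…,N1}`,
then the 2D Roesser system is finite-region stable w.r.t.
`({0,…,N1}×{0,…,N2}, diag(R1,R2), diag(Γ1,Γ2))`. -/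
theorem frs_sufficient_condition
    {n1 n2 N1 N2 : ℕ} (hN1pos : 0 < N1) (hN12 : N1 < N2)
    (A11 : ℕ → ℕ → Matrix (Fin n1) (Fin n1) ℝ)
    (A12 : ℕ → ℕ → Matrix (Fin n1) (Fin n2) ℝ)
    (A21 : ℕ → ℕ → Matrix (Fin n2) (Fin n1) ℝ)
    (A22 : ℕ → ℕ → Matrix (Fin n2) (Fin n2) ℝ)
    (R1 : ℕ → Matrix (Fin n1) (Fin n1) ℝ)
    (R2 : ℕ → Matrix (Fin n2) (Fin n2) ℝ)
    (Γ1 : ℕ → ℕ → Matrix (Fin n1) (Fin n1) ℝ)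
    (Γ2 : ℕ → ℕ → Matrix (Fin n2) (Fin n2) ℝ)
    (hR1 : ∀ k, (R1 k).PosDef) (hR2 : ∀ h, (R2 h).PosDef)
    (hΓ1 : ∀ h k, (Γ1 h k).PosDef) (hΓ2 : ∀ h k, (Γ2 h k).PosDef)
    (hΓR : (Matrix.fromBlocks (R1 0 - Γ1 0 0) 0 0 (R2 0 - Γ2 0 0)).PosDef)
    (P1 : ℕ → ℕ → Matrix (Fin n1) (Fin n1) ℝ)
    (P2 : ℕ → ℕ → Matrix (Fin n2) (Fin n2) ℝ)
    (hP1 : ∀ h k, h ≤ N1 + 1 → k ≤ N2 + 1 → (P1 h k).PosDef)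
    (hP2 : ∀ h k, h ≤ N1 + 1 → k ≤ N2 + 1 → (P2 h k).PosDef)
    -- (i) the difference LMI
    (hDLMI : ∀ h k, h ≤ N1 → k ≤ N2 →
      NegDef ((Matrix.fromBlocks (A11 h k) (A12 h k) (A21 h k) (A22 h k))ᵀ *
          Matrix.fromBlocks (P1 (h+1) k) 0 0 (P2 h (k+1)) *
          Matrix.fromBlocks (A11 h k) (A12 h k) (A21 h k) (A22 h k) -
          Matrix.fromBlocks (P1 h k) 0 0 (P2 h k)))
    -- (ii) `P(h,k) − Γ(h,k)` positive definite
    (hPΓ : ∀ h k, h ≤ N1 → k ≤ N2 →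
      (Matrix.fromBlocks (P1 h k - Γ1 h k) 0 0 (P2 h k - Γ2 h k)).PosDef)
    -- (iii) `R1(k) − P1(0,k)` positive semidefinite
    (hP1R : ∀ k, k ≤ N2 → (R1 k - P1 0 k).PosSemidef)
    -- (iv) `R2(h) − P2(h,0)` positive semidefinite
    (hP2R : ∀ h, h ≤ N1 → (R2 h - P2 h 0).PosSemidef)
    -- any solution of the 2D Roesser system
    (x1 : ℕ → ℕ → Fin n1 → ℝ) (x2 : ℕ → ℕ → Fin n2 → ℝ)
    (hdyn1 : ∀ h k, x1 (h+1) k = A11 h k *ᵥ x1 h k + A12 h k *ᵥ x2 h k)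
    (hdyn2 : ∀ h k, x2 h (k+1) = A21 h k *ᵥ x1 h k + A22 h k *ᵥ x2 h k)
    -- whose initial data satisfy the weighted bound
    (hinit : (∑ k ∈ Finset.range (N2+1), x1 0 k ⬝ᵥ (R1 k *ᵥ x1 0 k)) +
             (∑ h ∈ Finset.range (N1+1), x2 h 0 ⬝ᵥ (R2 h *ᵥ x2 h 0)) ≤ 1) :
    ∀ h k, h ≤ N1 → k ≤ N2 →
      x1 h k ⬝ᵥ (Γ1 h k *ᵥ x1 h k) + x2 h k ⬝ᵥ (Γ2 h k *ᵥ x2 h k) < 1 := by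
  exact frs_sufficient_condition_general
    (fun h k hh hk => (hP1 h k hh (Nat.le_succ_of_le hk)).posSemidef)
    (fun h k hh hk => (hP2 h k (Nat.le_succ_of_le hh) hk).posSemidef)
    (fun h k hh hk => (hDLMI h k hh hk).dotProduct_mulVec_nonpos) hPΓ hP1R hP2R hdyn1 hdyn2 hinit
end

section
/- Let N1 be a positive integer and let V1, V2 : ℕ×ℕ → ℝ satisfy V1(h+1,k) + V2(h,k+1) < V1(h,k) + V2(h,k) for all (h,k) with h + k ≤ N1 − 1. Then for every M with 0 < M ≤ N1, writing V(h,k) = V1(h,k) + V2(h,k), one has Σ_{h=0}^{M} V(h, M−h) < Σ_{k=0}^{M} V1(0,k) + Σ_{h=0}^{M} V2(h,0). -/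
/-!
Sum over the triangle `h + k ≤ M`: splitting off the edge `h = 0` shifts the rest of the sum of `V1`
to the triangle `h + k < M`, and splitting off the edge `k = 0` does the same for `V2`. So the sum
of `V1 + V2` over `h + k ≤ M` is the two edge sums plus the sum of `V1 (h + 1) k + V2 h (k + 1)`
over `h + k < M`, which is termwise smaller than `V1 h k + V2 h k`. Cancelling the triangle
`h + k < M` leaves the antidiagonal `h + k = M` against the edges.
-/

open Finset

section AddCommMonoid

variable {R : Type*} [AddCommMonoid R]

theorem sum_range_succ_sum_antidiagonal (f : ℕ → ℕ → R) (n : ℕ) :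
    ∑ m ∈ range (n + 1), ∑ p ∈ antidiagonal m, f p.1 p.2 =
      ∑ k ∈ range (n + 1), f 0 k + ∑ m ∈ range n, ∑ p ∈ antidiagonal m, f (p.1 + 1) p.2 := by
  simp only [sum_range_succ' _ n, Nat.sum_antidiagonal_succ, sum_add_distrib,
    Nat.antidiagonal_zero, sum_singleton]
  exact add_right_comm _ _ _

theorem sum_range_succ_sum_antidiagonal' (f : ℕ → ℕ → R) (n : ℕ) :
    ∑ m ∈ range (n + 1), ∑ p ∈ antidiagonal m, f p.1 p.2 =
      ∑ h ∈ range (n + 1), f h 0 + ∑ m ∈ range n, ∑ p ∈ antidiagonal m, f p.1 (p.2 + 1) := by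
  simp only [sum_range_succ' _ n, Nat.sum_antidiagonal_succ', sum_add_distrib,
    Nat.antidiagonal_zero, sum_singleton]
  exact add_right_comm _ _ _

theorem sum_antidiagonal_add_sum_range_sum_antidiagonal (f g : ℕ → ℕ → R) (n : ℕ) :
    ∑ p ∈ antidiagonal n, (f p.1 p.2 + g p.1 p.2) +
        ∑ m ∈ range n, ∑ p ∈ antidiagonal m, (f p.1 p.2 + g p.1 p.2) =
      (∑ k ∈ range (n + 1), f 0 k + ∑ h ∈ range (n + 1), g h 0) +
        ∑ m ∈ range n, ∑ p ∈ antidiagonal m, (f (p.1 + 1) p.2 + g p.1 (p.2 + 1)) := by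
  rw [add_comm, ← sum_range_succ]
  simp only [sum_add_distrib]
  rw [sum_range_succ_sum_antidiagonal f, sum_range_succ_sum_antidiagonal' g, add_add_add_comm]

end AddCommMonoid

theorem antidiagonal_sum_case_a_general {R : Type*} [AddCommMonoid R] [PartialOrder R]
    [IsOrderedCancelAddMonoid R] (V1 V2 : ℕ → ℕ → R) {M : ℕ} (hM : 0 < M)
    (hdec : ∀ h k, h + k < M → V1 (h + 1) k + V2 h (k + 1) < V1 h k + V2 h k) :
    ∑ p ∈ antidiagonal M, (V1 p.1 p.2 + V2 p.1 p.2) <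
      ∑ k ∈ range (M + 1), V1 0 k + ∑ h ∈ range (M + 1), V2 h 0 := by
  have shifted_lt :
      ∑ m ∈ range M, ∑ p ∈ antidiagonal m, (V1 (p.1 + 1) p.2 + V2 p.1 (p.2 + 1)) <
        ∑ m ∈ range M, ∑ p ∈ antidiagonal m, (V1 p.1 p.2 + V2 p.1 p.2) := by
    refine sum_lt_sum_of_nonempty (nonempty_range_iff.2 hM.ne') fun m hm ↦
      sum_lt_sum_of_nonempty ⟨(0, m), by simp⟩ fun p hp ↦ hdec p.1 p.2 ?_
    rw [mem_antidiagonal.1 hp]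
    exact mem_range.1 hm
  exact lt_of_add_lt_add_right <|
    (sum_antidiagonal_add_sum_range_sum_antidiagonal V1 V2 M).trans_lt (by gcongr)

/-- Case a) of the FRS proof: if `V1(h+1,k) + V2(h,k+1) < V1(h,k) + V2(h,k)` for all
`(h,k)` with `h + k ≤ N1 − 1`, then for every `M` with `0 < M ≤ N1` the anti-diagonal
sum of `V = V1 + V2` satisfies
`Σ_{h=0}^{M} V(h, M−h) < Σ_{k=0}^{M} V1(0,k) + Σ_{h=0}^{M} V2(h,0)`. -/
theorem antidiagonal_sum_case_a (N1 : ℕ) (hN1 : 0 < N1) (V1 V2 : ℕ → ℕ → ℝ)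
    (hdec : ∀ h k, h + k < N1 →
      V1 (h+1) k + V2 h (k+1) < V1 h k + V2 h k) :
    ∀ M, 0 < M → M ≤ N1 →
      ∑ h ∈ Finset.range (M+1), (V1 h (M-h) + V2 h (M-h)) <
        (∑ k ∈ Finset.range (M+1), V1 0 k) +
          ∑ h ∈ Finset.range (M+1), V2 h 0 := by
  intro M hM hMN
  rw [← Nat.sum_antidiagonal_eq_sum_range_succ fun h k ↦ V1 h k + V2 h k]
  exact antidiagonal_sum_case_a_general V1 V2 hM fun h k hhk ↦ hdec h k (hhk.trans_le hMN)
end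

section
/- Let N1 < N2 be positive integers and let V1, V2 : ℕ×ℕ → ℝ satisfy: (i) V1(h+1,k) + V2(h,k+1) < V1(h,k) + V2(h,k) for all (h,k) with 0 ≤ h ≤ N1, 0 ≤ k ≤ N2 − 1 and h + k ≤ N2 − 1; (ii) V1(N1+1, k) ≥ 0 for all k ∈ {0,…,N2−1}. Then for every M with N1 < M ≤ N2, writing V(h,k) = V1(h,k) + V2(h,k), one has Σ_{h=0}^{N1} V(h, M−h) < Σ_{k=0}^{M} V1(0,k) + Σ_{h=0}^{N1} V2(h,0). -/
/-!
Summing the decrease along row `h` over `k < M - h` telescopes `V2` and bounds `V h (M - h)` by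
`V2 h 0` plus the difference `R h - R (h + 1)`, where `R h` is the sum of `V1 h k` over
`k ≤ M - h`. Summing over the rows `h ≤ n` telescopes in turn and leaves `R 0 - R (n + 1)`, where
`R (n + 1)` is nonnegative by hypothesis. Both sums are written without subtraction, so `V1` and
`V2` may take values in an ordered cancellative monoid.
-/

open Finset

section OrderedCancelAddMonoid

variable {α : Type*} [AddCommMonoid α] [PartialOrder α] [IsOrderedCancelAddMonoid α]

theorem sum_range_add_lt_of_forall_add_succ_lt {a b c : ℕ → α} {n : ℕ} (hn : 0 < n)
    (hstep : ∀ i < n, b i + a (i + 1) < c i + a i) :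
    ∑ i ∈ range n, b i + a n < ∑ i ∈ range n, c i + a 0 := by
  induction n, hn using Nat.le_induction with
  | base => simpa using hstep 0 one_pos
  | succ n _ ih =>
    calc ∑ i ∈ range (n + 1), b i + a (n + 1)
        = ∑ i ∈ range n, b i + (b n + a (n + 1)) := by rw [sum_range_succ, add_assoc]
      _ < ∑ i ∈ range n, b i + (c n + a n) :=
        add_lt_add_right (hstep n n.lt_succ_self) _
      _ = c n + (∑ i ∈ range n, b i + a n) := add_left_comm _ _ _
      _ < c n + (∑ i ∈ range n, c i + a 0) :=
        add_lt_add_right (ih fun i hi => hstep i (hi.trans n.lt_succ_self)) _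
      _ = ∑ i ∈ range (n + 1), c i + a 0 := by rw [sum_range_succ_comm, add_assoc]

theorem row_end_add_sum_next_row_lt {u v w : ℕ → α} {m : ℕ} (hm : 0 < m)
    (hdec : ∀ k < m, u k + w (k + 1) < v k + w k) :
    v m + w m + ∑ k ∈ range m, u k < w 0 + ∑ k ∈ range (m + 1), v k :=
  calc v m + w m + ∑ k ∈ range m, u k
      = v m + (∑ k ∈ range m, u k + w m) := by rw [add_assoc, add_comm (w m)]
    _ < v m + (∑ k ∈ range m, v k + w 0) :=
      add_lt_add_right (sum_range_add_lt_of_forall_add_succ_lt hm hdec) _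
    _ = w 0 + ∑ k ∈ range (m + 1), v k := by rw [← add_assoc, ← sum_range_succ_comm, add_comm]

theorem sum_antidiagonal_add_sum_next_row_lt {V1 V2 : ℕ → ℕ → α} {n M : ℕ} (hnM : n < M)
    (hdec : ∀ h k, h ≤ n → h + k < M → V1 (h + 1) k + V2 h (k + 1) < V1 h k + V2 h k) :
    ∑ h ∈ range (n + 1), (V1 h (M - h) + V2 h (M - h)) + ∑ k ∈ range (M - n), V1 (n + 1) k <
      ∑ h ∈ range (n + 1), V2 h 0 + ∑ k ∈ range (M + 1), V1 0 k := by
  let R : ℕ → α := fun h => ∑ k ∈ range (M + 1 - h), V1 h k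
  have hR_succ (h : ℕ) : R (h + 1) = ∑ k ∈ range (M - h), V1 (h + 1) k := by
    simp only [R, Nat.add_sub_add_right]
  have hrow (h : ℕ) (hh : h < n + 1) :
      V1 h (M - h) + V2 h (M - h) + R (h + 1) < V2 h 0 + R h := by
    have hR : R h = ∑ k ∈ range (M - h + 1), V1 h k := by
      simp only [R, Nat.sub_add_comm (show h ≤ M by lia)]
    rw [hR_succ, hR]
    exact row_end_add_sum_next_row_lt (by lia) fun k hk => hdec h k (by lia) (by lia)
  rw [← hR_succ]
  exact sum_range_add_lt_of_forall_add_succ_lt n.succ_pos hrow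

theorem antidiagonal_sum_case_b_general {V1 V2 : ℕ → ℕ → α} {n M : ℕ} (hnM : n < M)
    (hdec : ∀ h k, h ≤ n → h + k < M → V1 (h + 1) k + V2 h (k + 1) < V1 h k + V2 h k)
    (hnn : ∀ k < M - n, 0 ≤ V1 (n + 1) k) :
    ∑ h ∈ range (n + 1), (V1 h (M - h) + V2 h (M - h)) <
      ∑ k ∈ range (M + 1), V1 0 k + ∑ h ∈ range (n + 1), V2 h 0 :=
  calc ∑ h ∈ range (n + 1), (V1 h (M - h) + V2 h (M - h))
      ≤ ∑ h ∈ range (n + 1), (V1 h (M - h) + V2 h (M - h)) + ∑ k ∈ range (M - n), V1 (n + 1) k :=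
        le_add_of_nonneg_right (sum_nonneg fun k hk => hnn k (mem_range.1 hk))
    _ < ∑ h ∈ range (n + 1), V2 h 0 + ∑ k ∈ range (M + 1), V1 0 k :=
        sum_antidiagonal_add_sum_next_row_lt hnM hdec
    _ = ∑ k ∈ range (M + 1), V1 0 k + ∑ h ∈ range (n + 1), V2 h 0 := add_comm _ _

end OrderedCancelAddMonoid

/-- Case b) of the FRS proof: let `N1 < N2`, suppose the one-step Lyapunov decrease
holds for `0 ≤ h ≤ N1`, `0 ≤ k ≤ N2 − 1`, `h + k ≤ N2 − 1`, and
`V1(N1+1, k) ≥ 0` for `k ∈ {0,…,N2−1}`. Then for every `M` with `N1 < M ≤ N2`,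
`Σ_{h=0}^{N1} V(h, M−h) < Σ_{k=0}^{M} V1(0,k) + Σ_{h=0}^{N1} V2(h,0)`,
where `V = V1 + V2`. -/
theorem antidiagonal_sum_case_b (N1 N2 : ℕ) (hN1 : 0 < N1) (hN12 : N1 < N2)
    (V1 V2 : ℕ → ℕ → ℝ)
    (hdec : ∀ h k, h ≤ N1 → k < N2 → h + k < N2 →
      V1 (h+1) k + V2 h (k+1) < V1 h k + V2 h k)
    (hnn : ∀ k, k < N2 → 0 ≤ V1 (N1+1) k) :
    ∀ M, N1 < M → M ≤ N2 →
      ∑ h ∈ Finset.range (N1+1), (V1 h (M-h) + V2 h (M-h)) <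
        (∑ k ∈ Finset.range (M+1), V1 0 k) +
          ∑ h ∈ Finset.range (N1+1), V2 h 0 := fun _ hM hMN =>
  antidiagonal_sum_case_b_general hM (fun h k hh hk => hdec h k hh (by lia) (by lia))
    fun k hk => hnn k (by lia)
end

section
/- Let N1 < N2 be positive integers and let V1, V2 : ℕ×ℕ → ℝ satisfy: (i) V1(h+1,k) + V2(h,k+1) < V1(h,k) + V2(h,k) for all (h,k) with 0 ≤ h ≤ N1, 0 ≤ k ≤ N2 and h + k ≤ N1 + N2 − 1; (ii) V1(N1+1, k) ≥ 0 for all k ∈ {0,…,N2}; (iii) V2(h, N2+1) ≥ 0 for all h ∈ {0,…,N1−1}. Then for every M with N2 < M ≤ N1 + N2, writing V(h,k) = V1(h,k) + V2(h,k), one has Σ_{h=M−N2}^{N1} V(h, M−h) < Σ_{k=0}^{N2} V1(0,k) + Σ_{h=0}^{N1} V2(h,0). -/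
/-!
View `V1 h k` as the flux across the left edge of the cell `(h, k)` and `V2 h k` as the flux across
its bottom edge. The decrease hypothesis says that every cell absorbs a positive amount. Summed over
the cells of the box `[0, N1] × [0, N2]` strictly below the antidiagonal `h + k = M`, the fluxes
across interior edges cancel, so less leaves this staircase region than enters it through the axes.
The flux leaves either through the antidiagonal or through one of the outer walls `h = N1 + 1`,
`k = N2 + 1` of the box, where it is nonnegative and may be discarded.
-/

open Finset

section Staircase

variable {G : Type*} [AddCommGroup G] {m n : ℕ} {a b : ℕ → ℕ}

/- In `hab`, `a k` is the length of row `k` and `b h` the height of column `h` of one and the same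
region, described once by columns and once by rows. -/
theorem sum_staircase_divergence (V1 V2 : ℕ → ℕ → G)
    (hab : ∀ h k, h < m ∧ k < b h ↔ h < a k ∧ k < n) :
    ∑ h ∈ range m, ∑ k ∈ range (b h), ((V1 h k - V1 (h + 1) k) + (V2 h k - V2 h (k + 1))) =
      (∑ k ∈ range n, V1 0 k + ∑ h ∈ range m, V2 h 0) -
        (∑ k ∈ range n, V1 (a k) k + ∑ h ∈ range m, V2 h (b h)) := by
  have horizontal : ∑ h ∈ range m, ∑ k ∈ range (b h), (V1 h k - V1 (h + 1) k) =
      ∑ k ∈ range n, (V1 0 k - V1 (a k) k) := by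
    rw [sum_comm' (s' := fun k => range (a k)) (t' := range n)
      (by simpa only [mem_range] using hab)]
    exact sum_congr rfl fun k _ => sum_range_sub' (V1 · k) (a k)
  have vertical : ∑ h ∈ range m, ∑ k ∈ range (b h), (V2 h k - V2 h (k + 1)) =
      ∑ h ∈ range m, (V2 h 0 - V2 h (b h)) :=
    sum_congr rfl fun h _ => sum_range_sub' (V2 h) (b h)
  simp only [sum_add_distrib]
  rw [horizontal, vertical, sum_sub_distrib, sum_sub_distrib, sub_add_sub_comm]

theorem sum_staircase_exit_lt_sum_entry [PartialOrder G] [IsOrderedAddMonoid G]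
    {V1 V2 : ℕ → ℕ → G} (hab : ∀ h k, h < m ∧ k < b h ↔ h < a k ∧ k < n)
    (hne : ∃ h < m, 0 < b h)
    (hdec : ∀ h < m, ∀ k < b h, V1 (h + 1) k + V2 h (k + 1) < V1 h k + V2 h k) :
    ∑ k ∈ range n, V1 (a k) k + ∑ h ∈ range m, V2 h (b h) <
      ∑ k ∈ range n, V1 0 k + ∑ h ∈ range m, V2 h 0 := by
  rw [← sub_pos, ← sum_staircase_divergence V1 V2 hab]
  have absorbed_pos : ∀ h ∈ range m, ∀ k ∈ range (b h),
      0 < (V1 h k - V1 (h + 1) k) + (V2 h k - V2 h (k + 1)) := by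
    intro h hh k hk
    rw [sub_add_sub_comm, sub_pos]
    exact hdec h (mem_range.mp hh) k (mem_range.mp hk)
  obtain ⟨h₀, hh₀, hb⟩ := hne
  exact sum_pos' (fun h hh => sum_nonneg fun k hk => (absorbed_pos h hh k hk).le)
    ⟨h₀, mem_range.mpr hh₀,
      sum_pos (absorbed_pos h₀ (mem_range.mpr hh₀)) (nonempty_range_iff.mpr hb.ne')⟩

end Staircase

theorem sum_Icc_tsub_antidiagonal_reflect {G : Type*} [AddCommMonoid G] (f : ℕ → ℕ → G)
    {a n M : ℕ} (ha : a ≤ M) (hn : n ≤ M) :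
    ∑ k ∈ Icc (M - a) n, f (M - k) k = ∑ h ∈ Icc (M - n) a, f h (M - h) := by
  refine sum_nbij' (M - ·) (M - ·) ?_ ?_ ?_ ?_ ?_ <;> intro k hk <;> rw [mem_Icc] at hk
  · rw [mem_Icc]; omega
  · rw [mem_Icc]; omega
  · omega
  · omega
  · rw [Nat.sub_sub_self (hk.2.trans hn)]

theorem sum_Icc_tsub_le_sum_range_min {G : Type*} [AddCommMonoid G] [PartialOrder G]
    [IsOrderedAddMonoid G] {f : ℕ → ℕ → G} {a n M : ℕ}
    (hf : ∀ k ≤ n, a + k < M → 0 ≤ f (a + 1) k) :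
    ∑ k ∈ Icc (M - a) n, f (M - k) k ≤ ∑ k ∈ range (n + 1), f (min (a + 1) (M - k)) k := by
  calc ∑ k ∈ Icc (M - a) n, f (M - k) k
      = ∑ k ∈ Icc (M - a) n, f (min (a + 1) (M - k)) k := by
        refine sum_congr rfl fun k hk => ?_
        rw [mem_Icc] at hk
        rw [min_eq_right (by omega)]
    _ ≤ ∑ k ∈ range (n + 1), f (min (a + 1) (M - k)) k := by
        refine sum_le_sum_of_subset_of_nonneg (fun k hk => ?_) fun k hk hk' => ?_
        · rw [mem_Icc] at hk
          exact mem_range.mpr (by omega)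
        · rw [mem_range] at hk
          rw [mem_Icc] at hk'
          rw [min_eq_left (by omega)]
          exact hf k (by omega) (by omega)

theorem antidiagonal_sum_case_c_general {G : Type*} [AddCommGroup G] [PartialOrder G]
    [IsOrderedAddMonoid G] {N1 N2 M : ℕ} (hN1 : N1 ≤ M) (hN2 : N2 ≤ M) (hM : 0 < M)
    {V1 V2 : ℕ → ℕ → G}
    (hdec : ∀ h k, h ≤ N1 → k ≤ N2 → h + k < M →
      V1 (h + 1) k + V2 h (k + 1) < V1 h k + V2 h k)
    (hnn1 : ∀ k ≤ N2, N1 + k < M → 0 ≤ V1 (N1 + 1) k)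
    (hnn2 : ∀ h ≤ N1, N2 + h < M → 0 ≤ V2 h (N2 + 1)) :
    ∑ h ∈ Icc (M - N2) N1, (V1 h (M - h) + V2 h (M - h)) <
      ∑ k ∈ range (N2 + 1), V1 0 k + ∑ h ∈ range (N1 + 1), V2 h 0 := by
  calc ∑ h ∈ Icc (M - N2) N1, (V1 h (M - h) + V2 h (M - h))
      = ∑ k ∈ Icc (M - N1) N2, V1 (M - k) k + ∑ h ∈ Icc (M - N2) N1, V2 h (M - h) := by
        rw [sum_add_distrib, sum_Icc_tsub_antidiagonal_reflect V1 hN1 hN2]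
    _ ≤ ∑ k ∈ range (N2 + 1), V1 (min (N1 + 1) (M - k)) k +
          ∑ h ∈ range (N1 + 1), V2 h (min (N2 + 1) (M - h)) :=
        add_le_add (sum_Icc_tsub_le_sum_range_min hnn1)
          (sum_Icc_tsub_le_sum_range_min (f := fun k h => V2 h k) hnn2)
    _ < ∑ k ∈ range (N2 + 1), V1 0 k + ∑ h ∈ range (N1 + 1), V2 h 0 :=
        sum_staircase_exit_lt_sum_entry (by omega) ⟨0, by omega, by omega⟩
          fun h _ k _ => hdec h k (by omega) (by omega) (by omega)

/-- Case c) of the FRS proof: let `N1 < N2`, suppose the one-step Lyapunov decrease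
holds for `0 ≤ h ≤ N1`, `0 ≤ k ≤ N2`, `h + k ≤ N1 + N2 − 1`, that
`V1(N1+1, k) ≥ 0` for `k ∈ {0,…,N2}` and `V2(h, N2+1) ≥ 0` for `h ∈ {0,…,N1−1}`.
Then for every `M` with `N2 < M ≤ N1 + N2`,
`Σ_{h=M−N2}^{N1} V(h, M−h) < Σ_{k=0}^{N2} V1(0,k) + Σ_{h=0}^{N1} V2(h,0)`,
where `V = V1 + V2`. -/
theorem antidiagonal_sum_case_c (N1 N2 : ℕ) (hN1 : 0 < N1) (hN12 : N1 < N2)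
    (V1 V2 : ℕ → ℕ → ℝ)
    (hdec : ∀ h k, h ≤ N1 → k ≤ N2 → h + k < N1 + N2 →
      V1 (h+1) k + V2 h (k+1) < V1 h k + V2 h k)
    (hnn1 : ∀ k, k ≤ N2 → 0 ≤ V1 (N1+1) k)
    (hnn2 : ∀ h, h < N1 → 0 ≤ V2 h (N2+1)) :
    ∀ M, N2 < M → M ≤ N1 + N2 →
      ∑ h ∈ Finset.Icc (M-N2) N1, (V1 h (M-h) + V2 h (M-h)) <
        (∑ k ∈ Finset.range (N2+1), V1 0 k) +
          ∑ h ∈ Finset.range (N1+1), V2 h 0 := by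
  intro M hM hMle
  exact antidiagonal_sum_case_c_general (by omega) hM.le (by omega)
    (fun h k hh hk hlt => hdec h k hh hk (by omega)) (fun k hk _ => hnn1 k hk)
    (fun h _ hlt => hnn2 h (by omega))
end

section
/- Consider the controlled 2D Roesser system x⁺(h,k) = A(h,k)x(h,k) + B(h,k)u(h,k), where x⁺(h,k) = (x1(h+1,k), x2(h,k+1)), with A(h,k) partitioned into blocks A11, A12, A21, A22 and B(h,k) = [[B1(h,k)],[B2(h,k)]] partitioned compatibly. Suppose there exist a symmetric positive definite 2D matrix-valued sequence Q(h,k) = diag(Q1(h,k), Q2(h,k)) and a 2D matrix-valued sequence L(h,k) such that, with Q⁺(h,k) = diag(Q1(h+1,k), Q2(h,k+1)): (i) the block matrix [[−Q(h,k), Q(h,k)A(h,k)ᵀ + L(h,k)ᵀB(h,k)ᵀ], [A(h,k)Q(h,k) + B(h,k)L(h,k), −Q⁺(h,k)]] is negative definite for all (h,k) ∈ {0,…,N1}×{0,…,N2}; (ii) Γ(h,k)⁻¹ − Q(h,k) is positive definite for all (h,k) ∈ {0,…,N1}×{0,…,N2}; (iii) Q1(0,k) − R1(k)⁻¹ is positive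 semidefinite for all k ∈ {0,…,N2}; (iv) Q2(h,0) − R2(h)⁻¹ is positive semidefinite for all h ∈ {0,…,N1}. Then the state feedback law u(h,k) = K(h,k)x(h,k) with K(h,k) = L(h,k)Q(h,k)⁻¹ renders the closed-loop system x⁺(h,k) = (A(h,k) + B(h,k)K(h,k))x(h,k) finite-region stable with respect to ({0,…,N1}×{0,…,N2}, R(h,k), Γ(h,k)): every closed-loop solution with Σ_{k=0}^{N2} x1(0,k)ᵀ R1(k) x1(0,k) + Σ_{h=0}^{N1} x2(h,0)ᵀ R2(h) x2(h,0) ≤ 1 satisfies x1(h,k)ᵀ Γ1(h,k) x1(h,k) + x2(h,k)ᵀ Γ2(h,k) x2(h,k) < 1 for all (h,k) ∈ {0,…,N1}×{0,…,N2}. -/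
open Matrix

/-!
With `P = Q⁻¹`, a Schur complement turns the matrix inequality (i) into the Lyapunov inequality
`Acᵀ P⁺ Ac ≤ P` for the closed loop `Ac = A + B L Q⁻¹`. Hence the energies `a = x1ᵀ P1 x1` and
`b = x2ᵀ P2 x2` satisfy `a(h+1,k) + b(h,k+1) ≤ a(h,k) + b(h,k)`: no cell of the grid emits more
energy than it receives. Summing over a rectangle, the energy at a node is at most the energy
entering through the boundary, which is at most `1` since inverting (iii) and (iv) gives `P1 ≤ R1`
and `P2 ≤ R2` there. Inverting (ii) gives `Γ < P`, whence the strict bound.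
-/

section Telescoping

variable {M : Type*} [AddCommMonoid M] [PartialOrder M] [IsOrderedAddMonoid M] {a b : ℕ → ℕ → M}

lemma sum_range_add_le_of_strip {h k : ℕ}
    (hab : ∀ j < k, a (h + 1) j + b h (j + 1) ≤ a h j + b h j) :
    ∑ j ∈ Finset.range k, a (h + 1) j + b h k ≤ ∑ j ∈ Finset.range k, a h j + b h 0 := by
  induction k with
  | zero => simp
  | succ k ih =>
    calc ∑ j ∈ Finset.range (k + 1), a (h + 1) j + b h (k + 1)
        = ∑ j ∈ Finset.range k, a (h + 1) j + (a (h + 1) k + b h (k + 1)) := by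
          rw [Finset.sum_range_succ, add_assoc]
      _ ≤ ∑ j ∈ Finset.range k, a (h + 1) j + (a h k + b h k) := by
          gcongr _ + ?_
          exact hab k k.lt_succ_self
      _ = a h k + (∑ j ∈ Finset.range k, a (h + 1) j + b h k) := add_left_comm _ _ _
      _ ≤ a h k + (∑ j ∈ Finset.range k, a h j + b h 0) := by
          gcongr _ + ?_
          exact ih fun j hj => hab j (hj.trans k.lt_succ_self)
      _ = ∑ j ∈ Finset.range (k + 1), a h j + b h 0 := by
          rw [Finset.sum_range_succ, add_left_comm, add_assoc, add_left_comm]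

lemma sum_range_add_sum_range_le_of_rectangle {h k : ℕ}
    (hab : ∀ i < h, ∀ j < k, a (i + 1) j + b i (j + 1) ≤ a i j + b i j) :
    ∑ j ∈ Finset.range k, a h j + ∑ i ∈ Finset.range h, b i k ≤
      ∑ j ∈ Finset.range k, a 0 j + ∑ i ∈ Finset.range h, b i 0 := by
  induction h with
  | zero => simp
  | succ h ih =>
    calc ∑ j ∈ Finset.range k, a (h + 1) j + ∑ i ∈ Finset.range (h + 1), b i k
        = (∑ j ∈ Finset.range k, a (h + 1) j + b h k) + ∑ i ∈ Finset.range h, b i k := by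
          rw [Finset.sum_range_succ, add_comm (∑ i ∈ Finset.range h, b i k), add_assoc]
      _ ≤ (∑ j ∈ Finset.range k, a h j + b h 0) + ∑ i ∈ Finset.range h, b i k := by
          gcongr ?_ + _
          exact sum_range_add_le_of_strip (hab h h.lt_succ_self)
      _ = (∑ j ∈ Finset.range k, a h j + ∑ i ∈ Finset.range h, b i k) + b h 0 :=
          add_right_comm _ _ _
      _ ≤ (∑ j ∈ Finset.range k, a 0 j + ∑ i ∈ Finset.range h, b i 0) + b h 0 := by
          gcongr ?_ + _
          exact ih fun i hi => hab i (hi.trans h.lt_succ_self)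
      _ = ∑ j ∈ Finset.range k, a 0 j + ∑ i ∈ Finset.range (h + 1), b i 0 := by
          rw [Finset.sum_range_succ, add_assoc]

lemma add_le_sum_boundary (ha : ∀ h k, 0 ≤ a h k) (hb : ∀ h k, 0 ≤ b h k) {h k : ℕ}
    (hab : ∀ i ≤ h, ∀ j ≤ k, a (i + 1) j + b i (j + 1) ≤ a i j + b i j) :
    a h k + b h k ≤
      ∑ j ∈ Finset.range (k + 1), a 0 j + ∑ i ∈ Finset.range (h + 1), b i 0 := by
  calc a h k + b h k
      ≤ a h k + (∑ j ∈ Finset.range k, a (h + 1) j + b h k) := by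
        gcongr
        exact le_add_of_nonneg_left (Finset.sum_nonneg fun j _ => ha (h + 1) j)
    _ ≤ a h k + (∑ j ∈ Finset.range k, a h j + b h 0) := by
        gcongr _ + ?_
        exact sum_range_add_le_of_strip fun j hj => hab h le_rfl j hj.le
    _ = ∑ j ∈ Finset.range (k + 1), a h j + b h 0 := by
        rw [Finset.sum_range_succ, add_left_comm, add_assoc, add_left_comm]
    _ ≤ (∑ j ∈ Finset.range (k + 1), a h j + ∑ i ∈ Finset.range h, b i (k + 1)) + b h 0 := by
        gcongr
        exact le_add_of_nonneg_right (Finset.sum_nonneg fun i _ => hb i (k + 1))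
    _ ≤ (∑ j ∈ Finset.range (k + 1), a 0 j + ∑ i ∈ Finset.range h, b i 0) + b h 0 := by
        gcongr ?_ + _
        exact sum_range_add_sum_range_le_of_rectangle
          fun i hi j hj => hab i hi.le j (Nat.lt_succ_iff.mp hj)
    _ = ∑ j ∈ Finset.range (k + 1), a 0 j + ∑ i ∈ Finset.range (h + 1), b i 0 := by
        rw [Finset.sum_range_succ (fun i => b i 0), add_assoc]

end Telescoping

section LoewnerOrder

variable {K n : Type*} [Field K] [PartialOrder K] [StarRing K] [Fintype n] [DecidableEq n]

-- Both sides say that the block matrix `[[P, 1], [1, Q]]` is positive semidefinite.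
lemma posSemidef_sub_inv_comm [StarOrderedRing K] {P Q : Matrix n n K}
    (hP : P.PosDef) (hQ : Q.PosDef) :
    (P - Q⁻¹).PosSemidef ↔ (Q - P⁻¹).PosSemidef := by
  let := hP.isUnit.invertible
  let := hQ.isUnit.invertible
  have hschur₁ := hP.fromBlocks₁₁ (1 : Matrix n n K) Q
  have hschur₂ := PosDef.fromBlocks₂₂ P (1 : Matrix n n K) hQ
  rw [conjTranspose_one, Matrix.one_mul, Matrix.mul_one] at hschur₁ hschur₂
  exact hschur₂.symm.trans hschur₁

lemma posSemidef_inv_sub_conjTranspose_mul_mul {m : Type*} [Fintype m] {Q : Matrix n n K}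
    (hQ : Q.PosDef) {F : Matrix m n K} {S : Matrix m m K} (h : (Q - Fᴴ * S * F).PosSemidef) :
    (Q⁻¹ - (F * Q⁻¹)ᴴ * S * (F * Q⁻¹)).PosSemidef := by
  have hdet : IsUnit Q.det := Q.isUnit_iff_isUnit_det.mp hQ.isUnit
  have hcongr : (Q⁻¹)ᴴ * (Q - Fᴴ * S * F) * Q⁻¹ = Q⁻¹ - (F * Q⁻¹)ᴴ * S * (F * Q⁻¹) := by
    rw [Matrix.mul_sub, Matrix.sub_mul, hQ.inv.isHermitian.eq, nonsing_inv_mul Q hdet,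
      Matrix.one_mul, conjTranspose_mul, hQ.inv.isHermitian.eq]
    simp only [Matrix.mul_assoc]
  exact hcongr ▸ h.conjTranspose_mul_mul_same Q⁻¹

open scoped ComplexOrder in
lemma posDef_inv_sub_comm {𝕜 : Type*} [RCLike 𝕜] {P Q : Matrix n n 𝕜}
    (hP : P.PosDef) (hQ : Q.PosDef) :
    (P⁻¹ - Q).PosDef ↔ (Q⁻¹ - P).PosDef := by
  have hP' : P⁻¹⁻¹ = P := nonsing_inv_nonsing_inv P (P.isUnit_iff_isUnit_det.mp hP.isUnit)
  have hQ' : Q⁻¹⁻¹ = Q := nonsing_inv_nonsing_inv Q (Q.isUnit_iff_isUnit_det.mp hQ.isUnit)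
  have hpsd : (P⁻¹ - Q).PosSemidef ↔ (Q⁻¹ - P).PosSemidef := by
    simpa only [hP', hQ'] using posSemidef_sub_inv_comm hP.inv hQ.inv
  have hfactor : P⁻¹ - Q = P⁻¹ * (Q⁻¹ - P) * Q := by
    simpa only [hQ'] using inv_sub_inv (iff_of_true hP.isUnit hQ.inv.isUnit)
  have hunit : IsUnit (P⁻¹ - Q) ↔ IsUnit (Q⁻¹ - P) := by
    rw [hfactor, hQ.isUnit.mul_right_iff, hP.inv.isUnit.mul_left_iff]
  refine ⟨fun h => ?_, fun h => ?_⟩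
  · exact (hpsd.mp h.posSemidef).posDef_iff_isUnit.mpr (hunit.mp h.isUnit)
  · exact (hpsd.mpr h.posSemidef).posDef_iff_isUnit.mpr (hunit.mpr h.isUnit)

end LoewnerOrder

section BlockDiagonal

variable {p q : Type*}

lemma sumElim_dotProduct_fromBlocks_diagonal_mulVec_s13 [Fintype p] [Fintype q]
    {α : Type*} [NonUnitalNonAssocSemiring α]
    (M : Matrix p p α) (N : Matrix q q α) (x : p → α) (y : q → α) :
    Sum.elim x y ⬝ᵥ (fromBlocks M 0 0 N *ᵥ Sum.elim x y) = x ⬝ᵥ (M *ᵥ x) + y ⬝ᵥ (N *ᵥ y) := by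
  simp [fromBlocks_mulVec, sumElim_dotProduct_sumElim]

lemma inv_fromBlocks_diagonal [Fintype p] [Fintype q] [DecidableEq p] [DecidableEq q]
    {α : Type*} [CommRing α] {M : Matrix p p α} {N : Matrix q q α} (h : IsUnit M ↔ IsUnit N) :
    (fromBlocks M 0 0 N)⁻¹ = fromBlocks M⁻¹ 0 0 N⁻¹ := by
  simp [inv_fromBlocks_zero₂₁_of_isUnit_iff _ _ _ h]

open scoped ComplexOrder in
lemma posDef_fromBlocks_diagonal [Finite p] [Finite q] {𝕜 : Type*} [RCLike 𝕜]
    {M : Matrix p p 𝕜} {N : Matrix q q 𝕜} (hM : M.PosDef) (hN : N.PosDef) :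
    (fromBlocks M 0 0 N).PosDef := by
  classical
  have := Fintype.ofFinite p
  have := Fintype.ofFinite q
  let := hM.isUnit.invertible
  have hpsd : (fromBlocks M 0 0 N).PosSemidef := by
    simpa using (hM.fromBlocks₁₁ 0 N).mpr (by simpa using hN.posSemidef)
  exact hpsd.posDef_iff_isUnit.mpr (isUnit_fromBlocks_zero₂₁.mpr ⟨hM.isUnit, hN.isUnit⟩)

end BlockDiagonal

section QuadraticForm

variable {n : Type*} [Fintype n] {M N : Matrix n n ℝ}

lemma dotProduct_mulVec_le_of_posSemidef_sub (h : (N - M).PosSemidef) (x : n → ℝ) :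
    x ⬝ᵥ (M *ᵥ x) ≤ x ⬝ᵥ (N *ᵥ x) := by
  simpa [sub_mulVec, dotProduct_sub] using h.dotProduct_mulVec_nonneg x

lemma dotProduct_mulVec_mulVec_le_of_posSemidef_sub {m : Type*} [Fintype m]
    {A : Matrix m n ℝ} {P : Matrix n n ℝ} {P' : Matrix m m ℝ}
    (h : (P - Aᴴ * P' * A).PosSemidef) (x : n → ℝ) :
    (A *ᵥ x) ⬝ᵥ (P' *ᵥ (A *ᵥ x)) ≤ x ⬝ᵥ (P *ᵥ x) := by
  refine le_of_eq_of_le ?_ (dotProduct_mulVec_le_of_posSemidef_sub h x)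
  rw [← mulVec_mulVec, ← mulVec_mulVec, conjTranspose_eq_transpose_of_trivial,
    dotProduct_transpose_mulVec, dotProduct_comm]

lemma dotProduct_mulVec_lt_of_posDef_sub (h : (N - M).PosDef) {x : n → ℝ} (hx : x ≠ 0) :
    x ⬝ᵥ (M *ᵥ x) < x ⬝ᵥ (N *ᵥ x) := by
  simpa [sub_mulVec, dotProduct_sub] using h.dotProduct_mulVec_pos hx

/-- Negative semidefiniteness of a real square matrix, the non-strict counterpart of `NegDef`;
like `NegDef`, it only constrains the quadratic form and does not include symmetry. -/
def NegSemidef (M : Matrix n n ℝ) : Prop :=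
  ∀ x : n → ℝ, x ⬝ᵥ (M *ᵥ x) ≤ 0

lemma NegDef.negSemidef (h : NegDef M) : NegSemidef M := fun x => by
  rcases eq_or_ne x 0 with rfl | hx
  · simp
  · exact (h x hx).le

lemma NegSemidef.posSemidef_neg (h : NegSemidef M) (hM : M.IsHermitian) :
    (-M).PosSemidef :=
  .of_dotProduct_mulVec_nonneg hM.neg fun x => by
    simpa [neg_mulVec] using h x

lemma NegSemidef.posSemidef_schur_complement {m : Type*} [Fintype m] [DecidableEq m]
    {Q : Matrix n n ℝ} {S : Matrix m m ℝ} {F : Matrix m n ℝ} (hQ : Q.IsHermitian) (hS : S.PosDef)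
    (h : NegSemidef (fromBlocks (-Q) Fᴴ F (-S))) : (Q - Fᴴ * S⁻¹ * F).PosSemidef := by
  let := hS.isUnit.invertible
  have hpsd : (fromBlocks Q (-Fᴴ) (-Fᴴ)ᴴ S).PosSemidef := by
    simpa [fromBlocks_neg] using h.posSemidef_neg
      (hQ.neg.fromBlocks (conjTranspose_conjTranspose F) hS.isHermitian.neg)
  simpa using (PosDef.fromBlocks₂₂ Q (-Fᴴ) hS).mp hpsd

end QuadraticForm

section Roesser

variable {p q : Type*} [Fintype p] [Fintype q]

/-- Finite-region stability of the Roesser system `x⁺(h,k) = A(h,k) x(h,k)` with respect to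
`({0,…,N1} × {0,…,N2}, diag(R1(k), R2(h)), diag(Γ1(h,k), Γ2(h,k)))`. The state `(x1, x2)` is
encoded as the vector `Sum.elim x1 x2` on `p ⊕ q`, and trajectories live on all of `ℕ × ℕ`. -/
def FiniteRegionStable (A : ℕ → ℕ → Matrix (p ⊕ q) (p ⊕ q) ℝ) (N1 N2 : ℕ)
    (R1 : ℕ → Matrix p p ℝ) (R2 : ℕ → Matrix q q ℝ)
    (Γ1 : ℕ → ℕ → Matrix p p ℝ) (Γ2 : ℕ → ℕ → Matrix q q ℝ) : Prop :=
  ∀ (x1 : ℕ → ℕ → p → ℝ) (x2 : ℕ → ℕ → q → ℝ),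
    (∀ h k, Sum.elim (x1 (h + 1) k) (x2 h (k + 1)) = A h k *ᵥ Sum.elim (x1 h k) (x2 h k)) →
    (∑ k ∈ Finset.range (N2 + 1), x1 0 k ⬝ᵥ (R1 k *ᵥ x1 0 k)) +
      (∑ h ∈ Finset.range (N1 + 1), x2 h 0 ⬝ᵥ (R2 h *ᵥ x2 h 0)) ≤ 1 →
    ∀ h k, h ≤ N1 → k ≤ N2 →
      x1 h k ⬝ᵥ (Γ1 h k *ᵥ x1 h k) + x2 h k ⬝ᵥ (Γ2 h k *ᵥ x2 h k) < 1

theorem finiteRegionStable_of_lyapunov {N1 N2 : ℕ} {A : ℕ → ℕ → Matrix (p ⊕ q) (p ⊕ q) ℝ}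
    {R1 : ℕ → Matrix p p ℝ} {R2 : ℕ → Matrix q q ℝ}
    {Γ1 P1 : ℕ → ℕ → Matrix p p ℝ} {Γ2 P2 : ℕ → ℕ → Matrix q q ℝ}
    (hP1 : ∀ h k, (P1 h k).PosSemidef) (hP2 : ∀ h k, (P2 h k).PosSemidef)
    (hA : ∀ h k, h ≤ N1 → k ≤ N2 → (fromBlocks (P1 h k) 0 0 (P2 h k) -
      (A h k)ᴴ * fromBlocks (P1 (h + 1) k) 0 0 (P2 h (k + 1)) * A h k).PosSemidef)
    (hΓP : ∀ h k, h ≤ N1 → k ≤ N2 →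
      (fromBlocks (P1 h k) 0 0 (P2 h k) - fromBlocks (Γ1 h k) 0 0 (Γ2 h k)).PosDef)
    (hPR1 : ∀ k, k ≤ N2 → (R1 k - P1 0 k).PosSemidef)
    (hPR2 : ∀ h, h ≤ N1 → (R2 h - P2 h 0).PosSemidef) :
    FiniteRegionStable A N1 N2 R1 R2 Γ1 Γ2 := by
  intro x1 x2 hx hinit h k hh hk
  let a : ℕ → ℕ → ℝ := fun h k => x1 h k ⬝ᵥ (P1 h k *ᵥ x1 h k)
  let b : ℕ → ℕ → ℝ := fun h k => x2 h k ⬝ᵥ (P2 h k *ᵥ x2 h k)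
  have ha : ∀ h k, 0 ≤ a h k := fun h k => (hP1 h k).dotProduct_mulVec_nonneg (x1 h k)
  have hb : ∀ h k, 0 ≤ b h k := fun h k => (hP2 h k).dotProduct_mulVec_nonneg (x2 h k)
  have hdiss : ∀ i ≤ h, ∀ j ≤ k, a (i + 1) j + b i (j + 1) ≤ a i j + b i j := by
    intro i hi j hj
    have := dotProduct_mulVec_mulVec_le_of_posSemidef_sub (hA i j (hi.trans hh) (hj.trans hk))
      (Sum.elim (x1 i j) (x2 i j))
    rwa [← hx, sumElim_dotProduct_fromBlocks_diagonal_mulVec_s13,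
      sumElim_dotProduct_fromBlocks_diagonal_mulVec_s13] at this
  have henergy : a h k + b h k ≤ 1 :=
    calc a h k + b h k
        ≤ ∑ j ∈ Finset.range (k + 1), a 0 j + ∑ i ∈ Finset.range (h + 1), b i 0 :=
          add_le_sum_boundary ha hb hdiss
      _ ≤ ∑ j ∈ Finset.range (N2 + 1), a 0 j + ∑ i ∈ Finset.range (N1 + 1), b i 0 := by
          gcongr <;> simp [ha, hb]
      _ ≤ ∑ j ∈ Finset.range (N2 + 1), x1 0 j ⬝ᵥ (R1 j *ᵥ x1 0 j) +
            ∑ i ∈ Finset.range (N1 + 1), x2 i 0 ⬝ᵥ (R2 i *ᵥ x2 i 0) := by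
          gcongr with j hj i hi
          · exact dotProduct_mulVec_le_of_posSemidef_sub
              (hPR1 j (Finset.mem_range_succ_iff.mp hj)) _
          · exact dotProduct_mulVec_le_of_posSemidef_sub
              (hPR2 i (Finset.mem_range_succ_iff.mp hi)) _
      _ ≤ 1 := hinit
  rw [← sumElim_dotProduct_fromBlocks_diagonal_mulVec_s13] at henergy ⊢
  rcases eq_or_ne (Sum.elim (x1 h k) (x2 h k)) 0 with hzero | hne
  · simp [hzero]
  · exact (dotProduct_mulVec_lt_of_posDef_sub (hΓP h k hh hk) hne).trans_le henergy

lemma NegSemidef.posSemidef_lyapunov_closedLoop {m n r : Type*} [Fintype m] [DecidableEq m]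
    [Fintype n] [DecidableEq n] [Fintype r] {A : Matrix m n ℝ} {B : Matrix m r ℝ} {L : Matrix r n ℝ}
    {Q : Matrix n n ℝ} {Q' : Matrix m m ℝ} (hQ : Q.PosDef) (hQ' : Q'.PosDef)
    (h : NegSemidef (fromBlocks (-Q) (Q * Aᵀ + Lᵀ * Bᵀ) (A * Q + B * L) (-Q'))) :
    (Q⁻¹ - (A + B * (L * Q⁻¹))ᴴ * Q'⁻¹ * (A + B * (L * Q⁻¹))).PosSemidef := by
  have hF : Q * Aᵀ + Lᵀ * Bᵀ = (A * Q + B * L)ᴴ := by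
    rw [conjTranspose_add, conjTranspose_mul, conjTranspose_mul, hQ.isHermitian.eq]
    simp only [conjTranspose_eq_transpose_of_trivial]
  have hclosed : (A * Q + B * L) * Q⁻¹ = A + B * (L * Q⁻¹) := by
    rw [Matrix.add_mul, mul_nonsing_inv_cancel_right Q A
      (Q.isUnit_iff_isUnit_det.mp hQ.isUnit), Matrix.mul_assoc]
  rw [hF] at h
  rw [← hclosed]
  exact posSemidef_inv_sub_conjTranspose_mul_mul hQ
    (h.posSemidef_schur_complement hQ.isHermitian hQ')

theorem finite_region_stabilization_general [DecidableEq p] [DecidableEq q]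
    {r : Type*} [Fintype r] {N1 N2 : ℕ}
    {A : ℕ → ℕ → Matrix (p ⊕ q) (p ⊕ q) ℝ} {B : ℕ → ℕ → Matrix (p ⊕ q) r ℝ}
    {R1 : ℕ → Matrix p p ℝ} {R2 : ℕ → Matrix q q ℝ}
    {Γ1 Q1 : ℕ → ℕ → Matrix p p ℝ} {Γ2 Q2 : ℕ → ℕ → Matrix q q ℝ}
    {L : ℕ → ℕ → Matrix r (p ⊕ q) ℝ}
    (hR1 : ∀ k, (R1 k).PosDef) (hR2 : ∀ h, (R2 h).PosDef)
    (hΓ1 : ∀ h k, (Γ1 h k).PosDef) (hΓ2 : ∀ h k, (Γ2 h k).PosDef)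
    (hQ1 : ∀ h k, (Q1 h k).PosDef) (hQ2 : ∀ h k, (Q2 h k).PosDef)
    (hLMI : ∀ h k, h ≤ N1 → k ≤ N2 →
      NegSemidef (fromBlocks
        (-(fromBlocks (Q1 h k) 0 0 (Q2 h k)))
        (fromBlocks (Q1 h k) 0 0 (Q2 h k) * (A h k)ᵀ + (L h k)ᵀ * (B h k)ᵀ)
        (A h k * fromBlocks (Q1 h k) 0 0 (Q2 h k) + B h k * L h k)
        (-(fromBlocks (Q1 (h + 1) k) 0 0 (Q2 h (k + 1))))))
    (hΓQ : ∀ h k, h ≤ N1 → k ≤ N2 →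
      ((fromBlocks (Γ1 h k) 0 0 (Γ2 h k))⁻¹ - fromBlocks (Q1 h k) 0 0 (Q2 h k)).PosDef)
    (hQR1 : ∀ k, k ≤ N2 → (Q1 0 k - (R1 k)⁻¹).PosSemidef)
    (hQR2 : ∀ h, h ≤ N1 → (Q2 h 0 - (R2 h)⁻¹).PosSemidef) :
    FiniteRegionStable
      (fun h k => A h k + B h k * (L h k * (fromBlocks (Q1 h k) 0 0 (Q2 h k))⁻¹))
      N1 N2 R1 R2 Γ1 Γ2 := by
  have hQ : ∀ h k, (fromBlocks (Q1 h k) 0 0 (Q2 h k)).PosDef := fun h k =>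
    posDef_fromBlocks_diagonal (hQ1 h k) (hQ2 h k)
  have hΓ : ∀ h k, (fromBlocks (Γ1 h k) 0 0 (Γ2 h k)).PosDef := fun h k =>
    posDef_fromBlocks_diagonal (hΓ1 h k) (hΓ2 h k)
  have hinv : ∀ h₁ k₁ h₂ k₂, fromBlocks (Q1 h₁ k₁)⁻¹ 0 0 (Q2 h₂ k₂)⁻¹ =
      (fromBlocks (Q1 h₁ k₁) 0 0 (Q2 h₂ k₂))⁻¹ := fun h₁ k₁ h₂ k₂ =>
    (inv_fromBlocks_diagonal (iff_of_true (hQ1 h₁ k₁).isUnit (hQ2 h₂ k₂).isUnit)).symm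
  refine finiteRegionStable_of_lyapunov (P1 := fun h k => (Q1 h k)⁻¹) (P2 := fun h k => (Q2 h k)⁻¹)
    (fun h k => (hQ1 h k).inv.posSemidef) (fun h k => (hQ2 h k).inv.posSemidef)
    (fun h k hh hk => ?_) (fun h k hh hk => ?_)
    (fun k hk => (posSemidef_sub_inv_comm (hQ1 0 k) (hR1 k)).mp (hQR1 k hk))
    (fun h hh => (posSemidef_sub_inv_comm (hQ2 h 0) (hR2 h)).mp (hQR2 h hh))
  · simp only [hinv]
    exact (hLMI h k hh hk).posSemidef_lyapunov_closedLoop (hQ h k)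
      (posDef_fromBlocks_diagonal (hQ1 (h + 1) k) (hQ2 h (k + 1)))
  · rw [hinv]
    exact (posDef_inv_sub_comm (hΓ h k) (hQ h k)).mp (hΓQ h k hh hk)

end Roesser

/-- **Finite-region stabilization via state feedback.** If there exist a symmetric
positive definite block-diagonal 2D matrix-valued sequence
`Q(h,k) = diag(Q1(h,k), Q2(h,k))` and a 2D matrix-valued sequence `L(h,k)` such that,
with `Q⁺(h,k) = diag(Q1(h+1,k), Q2(h,k+1))`,
(i) `[[−Q, QAᵀ + LᵀBᵀ], [AQ + BL, −Q⁺]] < 0` on `{0,…,N1}×{0,…,N2}`,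
(ii) `Q(h,k) < Γ(h,k)⁻¹` on `{0,…,N1}×{0,…,N2}`,
(iii) `Q1(0,k) ≥ R1(k)⁻¹` for `k ∈ {0,…,N2}`,
(iv) `Q2(h,0) ≥ R2(h)⁻¹` for `h ∈ {0,…,N1}`,
then the state feedback `u = K x` with `K(h,k) = L(h,k) Q(h,k)⁻¹` renders the
closed-loop Roesser system finite-region stable w.r.t.
`({0,…,N1}×{0,…,N2}, diag(R1,R2), diag(Γ1,Γ2))`. -/
theorem finite_region_stabilization
    {n1 n2 m N1 N2 : ℕ} (hN1pos : 0 < N1) (hN12 : N1 < N2)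
    (A11 : ℕ → ℕ → Matrix (Fin n1) (Fin n1) ℝ)
    (A12 : ℕ → ℕ → Matrix (Fin n1) (Fin n2) ℝ)
    (A21 : ℕ → ℕ → Matrix (Fin n2) (Fin n1) ℝ)
    (A22 : ℕ → ℕ → Matrix (Fin n2) (Fin n2) ℝ)
    (B1 : ℕ → ℕ → Matrix (Fin n1) (Fin m) ℝ)
    (B2 : ℕ → ℕ → Matrix (Fin n2) (Fin m) ℝ)
    (R1 : ℕ → Matrix (Fin n1) (Fin n1) ℝ)
    (R2 : ℕ → Matrix (Fin n2) (Fin n2) ℝ)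
    (Γ1 : ℕ → ℕ → Matrix (Fin n1) (Fin n1) ℝ)
    (Γ2 : ℕ → ℕ → Matrix (Fin n2) (Fin n2) ℝ)
    (hR1 : ∀ k, (R1 k).PosDef) (hR2 : ∀ h, (R2 h).PosDef)
    (hΓ1 : ∀ h k, (Γ1 h k).PosDef) (hΓ2 : ∀ h k, (Γ2 h k).PosDef)
    (hΓR : (Matrix.fromBlocks (R1 0 - Γ1 0 0) 0 0 (R2 0 - Γ2 0 0)).PosDef)
    (Q1 : ℕ → ℕ → Matrix (Fin n1) (Fin n1) ℝ)
    (Q2 : ℕ → ℕ → Matrix (Fin n2) (Fin n2) ℝ)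
    (L : ℕ → ℕ → Matrix (Fin m) (Fin n1 ⊕ Fin n2) ℝ)
    (hQ1 : ∀ h k, (Q1 h k).PosDef) (hQ2 : ∀ h k, (Q2 h k).PosDef)
    -- (i) the design DLMI
    (hLMI : ∀ h k, h ≤ N1 → k ≤ N2 →
      NegDef (Matrix.fromBlocks
        (-(Matrix.fromBlocks (Q1 h k) 0 0 (Q2 h k)))
        (Matrix.fromBlocks (Q1 h k) 0 0 (Q2 h k) *
            (Matrix.fromBlocks (A11 h k) (A12 h k) (A21 h k) (A22 h k))ᵀ +
          (L h k)ᵀ * (Matrix.fromRows (B1 h k) (B2 h k))ᵀ)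
        (Matrix.fromBlocks (A11 h k) (A12 h k) (A21 h k) (A22 h k) *
            Matrix.fromBlocks (Q1 h k) 0 0 (Q2 h k) +
          Matrix.fromRows (B1 h k) (B2 h k) * L h k)
        (-(Matrix.fromBlocks (Q1 (h+1) k) 0 0 (Q2 h (k+1))))))
    -- (ii) `Γ(h,k)⁻¹ − Q(h,k)` positive definite
    (hΓQ : ∀ h k, h ≤ N1 → k ≤ N2 →
      ((Matrix.fromBlocks (Γ1 h k) 0 0 (Γ2 h k))⁻¹ -
        Matrix.fromBlocks (Q1 h k) 0 0 (Q2 h k)).PosDef)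
    -- (iii) `Q1(0,k) − R1(k)⁻¹` positive semidefinite
    (hQR1 : ∀ k, k ≤ N2 → (Q1 0 k - (R1 k)⁻¹).PosSemidef)
    -- (iv) `Q2(h,0) − R2(h)⁻¹` positive semidefinite
    (hQR2 : ∀ h, h ≤ N1 → (Q2 h 0 - (R2 h)⁻¹).PosSemidef) :
    -- conclusion: the closed loop with `K(h,k) = L(h,k) Q(h,k)⁻¹` is FRS
    ∀ (x1 : ℕ → ℕ → Fin n1 → ℝ) (x2 : ℕ → ℕ → Fin n2 → ℝ),
      (∀ h k, Sum.elim (x1 (h+1) k) (x2 h (k+1)) =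
        (Matrix.fromBlocks (A11 h k) (A12 h k) (A21 h k) (A22 h k) +
          Matrix.fromRows (B1 h k) (B2 h k) *
            (L h k * (Matrix.fromBlocks (Q1 h k) 0 0 (Q2 h k))⁻¹)) *ᵥ
          Sum.elim (x1 h k) (x2 h k)) →
      (∑ k ∈ Finset.range (N2+1), x1 0 k ⬝ᵥ (R1 k *ᵥ x1 0 k)) +
        (∑ h ∈ Finset.range (N1+1), x2 h 0 ⬝ᵥ (R2 h *ᵥ x2 h 0)) ≤ 1 →
      ∀ h k, h ≤ N1 → k ≤ N2 →
        x1 h k ⬝ᵥ (Γ1 h k *ᵥ x1 h k) + x2 h k ⬝ᵥ (Γ2 h k *ᵥ x2 h k) < 1 :=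
  finite_region_stabilization_general hR1 hR2 hΓ1 hΓ2 hQ1 hQ2
    (fun h k hh hk => (hLMI h k hh hk).negSemidef) hΓQ hQR1 hQR2
end
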